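/- For all constants s, ε ∈ (0,1) with s(1 + ε) < 1 there exist a positive integer t₀ and a positive integer m₀ such that for every integer t ≥ t₀ and every integer m ≥ m₀ the following holds. Let L = (L₁, …, L_{tm}) be a sequence of t·m indices chosen independently and uniformly at random from {1,…,m}. Call L balanced if: (i) for every subset S ⊆ {1,…,m} with |S| = ⌊s·m⌋, the number of positions a ∈ {1,…,tm} with L_a ∈ S is at most s(1 + ε/3)·t·m; and (ii) for every subset S ⊆ {1,…,m} with |S| = ⌈s(1 + ε)·m⌉, the number of positions a with L_a ∈ S is at least s(1 + 2ε/3)·t·m. Then the probability that L is not balanced is at most e^{−10m}. -/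

import Mathlib

/-!
For a fixed set `S` of size `k`, the number `N` of positions of `L` with `L a ∈ S` is binomial with
`n = t·m` trials and success probability `p = k/m`, so its moment generating function is
`(1 + p(eˣ - 1))ⁿ ≤ exp(n p (x + x²))` for `|x| ≤ 1`, and Markov's inequality for `exp(x N)`
gives the Chernoff bound `prob_count_le`. With `x = ε/6` and `p ≤ s` the upper tail has
probability at most `exp(-c n)`, and with `x = -ε/12` and `p ≥ s(1+ε)` so does the lower tail,
where `c = sε²/72`. A union bound over the `2^m` sets `S` costs a factor that does not depend
on `t`, so any `t ≥ 12/c` gives `2 · 2^m · exp(-c t m) ≤ exp(-10 m)`.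
-/

open Finset

open Classical in
/-- The probability of the event `E` under the uniform distribution on the finite type `Ω`. -/
noncomputable def prob {Ω : Type*} [Fintype Ω] (E : Ω → Prop) : ℝ :=
  ((Finset.univ.filter E).card : ℝ) / (Fintype.card Ω : ℝ)

/-- A random list `L` of `t·m` indices from `{1,…,m}` is balanced if every set of `⌊s·m⌋`
clauses is hit at most `s(1+ε/3)·t·m` times and every set of `⌈s(1+ε)·m⌉` clauses is hit at
least `s(1+2ε/3)·t·m` times. -/
def BalancedList (s ε : ℝ) (t m : ℕ) (L : Fin (t * m) → Fin m) : Prop :=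
  (∀ S : Finset (Fin m), S.card = Nat.floor (s * m) →
    ((Finset.univ.filter (fun a : Fin (t * m) => L a ∈ S)).card : ℝ)
      ≤ s * (1 + ε / 3) * t * m) ∧
  (∀ S : Finset (Fin m), S.card = Nat.ceil (s * (1 + ε) * m) →
    s * (1 + 2 * ε / 3) * t * m ≤
      ((Finset.univ.filter (fun a : Fin (t * m) => L a ∈ S)).card : ℝ))

/-- Markov's inequality: `f` dominates the indicator of `E`. -/
lemma prob_le_of_indicator_le {Ω : Type*} [Fintype Ω] (E : Ω → Prop) (f : Ω → ℝ)
    (h0 : ∀ ω, 0 ≤ f ω) (h1 : ∀ ω, E ω → 1 ≤ f ω) :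
    prob E ≤ (∑ ω, f ω) / (Fintype.card Ω : ℝ) := by
  classical
  unfold prob
  gcongr
  rw [Finset.card_eq_sum_ones, Nat.cast_sum, Finset.sum_filter]
  refine Finset.sum_le_sum fun ω _ => ?_
  split_ifs with h
  · simpa using h1 ω h
  · exact h0 ω

lemma prob_mono {Ω : Type*} [Fintype Ω] {E F : Ω → Prop} (h : ∀ ω, E ω → F ω) :
    prob E ≤ prob F := by
  classical
  unfold prob
  gcongr with ω
  exact h ω

lemma prob_or_le {Ω : Type*} [Fintype Ω] (E F : Ω → Prop) :
    prob (fun ω => E ω ∨ F ω) ≤ prob E + prob F := by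
  classical
  unfold prob
  rw [← add_div]
  gcongr
  norm_cast
  refine le_trans (Finset.card_le_card ?_) (Finset.card_union_le _ _)
  intro ω
  simp

lemma prob_exists_le {Ω ι : Type*} [Fintype Ω] [Fintype ι] (E : ι → Ω → Prop) :
    prob (fun ω => ∃ i, E i ω) ≤ ∑ i, prob (E i) := by
  classical
  unfold prob
  rw [← Finset.sum_div]
  gcongr
  norm_cast
  refine le_trans (Finset.card_le_card ?_) Finset.card_biUnion_le
  intro ω
  simp

/-- The moment generating function of a binomial variable, before normalization. -/
lemma sum_exp_count (n m : ℕ) (S : Finset (Fin m)) (x : ℝ) :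
    ∑ L : Fin n → Fin m,
        Real.exp (x * ((Finset.univ.filter (fun a => L a ∈ S)).card : ℝ))
      = (m + S.card * (Real.exp x - 1)) ^ n := by
  have h : (∑ i : Fin m, if i ∈ S then Real.exp x else 1)
      = m + S.card * (Real.exp x - 1) := by
    have h' : ∀ i : Fin m, (if i ∈ S then Real.exp x else 1)
        = 1 + if i ∈ S then (Real.exp x - 1) else 0 := by
      intro i
      split_ifs <;> ring
    simp [h', Finset.sum_add_distrib, mul_sub]
  rw [← h, Fintype.sum_pow]
  refine Finset.sum_congr rfl fun L _ => ?_
  rw [Finset.prod_ite]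
  simp [← Real.exp_nat_mul, mul_comm]

/-- Chernoff bound with parameter `x` of either sign: `x > 0` controls the upper tail of the number
of hits of `S`, and `x < 0` the lower tail. -/
lemma prob_count_le (n m : ℕ) (hm : 0 < m) (S : Finset (Fin m)) (x b : ℝ) (hx : |x| ≤ 1) :
    prob (fun L : Fin n → Fin m =>
        b ≤ x * ((Finset.univ.filter (fun a => L a ∈ S)).card : ℝ))
      ≤ Real.exp (n * (S.card / m * (x + x ^ 2)) - b) := by
  have hm' : (0 : ℝ) < m := by exact_mod_cast hm
  have hp : (S.card : ℝ) / m ≤ 1 := by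
    rw [div_le_one hm']
    exact_mod_cast (Finset.card_le_univ S).trans_eq (Fintype.card_fin m)
  have hp0 : (0 : ℝ) ≤ S.card / m := by positivity
  refine (prob_le_of_indicator_le _
    (fun L => Real.exp (x * ((Finset.univ.filter (fun a => L a ∈ S)).card : ℝ)) * Real.exp (-b))
    (fun _ => by positivity) fun L hL => ?_).trans ?_
  · rw [← Real.exp_add]
    exact Real.one_le_exp (by linarith)
  · rw [← Finset.sum_mul, sum_exp_count, Fintype.card_fun, Fintype.card_fin, Fintype.card_fin,
      Nat.cast_pow, mul_div_right_comm, ← div_pow, sub_eq_add_neg _ b, Real.exp_add, Real.exp_nat_mul]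
    have e : ((m : ℝ) + S.card * (Real.exp x - 1)) / m
        = 1 + S.card / m * (Real.exp x - 1) := by
      field_simp
    have hexp : Real.exp x - 1 ≤ x + x ^ 2 := by
      have := (abs_le.1 (Real.abs_exp_sub_one_sub_id_le hx)).2
      linarith
    rw [e]
    gcongr
    · nlinarith [Real.exp_pos x]
    · calc 1 + (S.card : ℝ) / m * (Real.exp x - 1)
          ≤ S.card / m * (x + x ^ 2) + 1 := by
            nlinarith [mul_le_mul_of_nonneg_left hexp hp0]
        _ ≤ _ := Real.add_one_le_exp _

lemma prob_upper_le {s ε : ℝ} (hs : 0 < s) (hε : 0 < ε) (hε1 : ε < 1) (t m : ℕ) (hm : 0 < m)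
    (S : Finset (Fin m)) (hS : (S.card : ℝ) ≤ s * m) :
    prob (fun L : Fin (t * m) → Fin m =>
        s * (1 + ε / 3) * t * m < ((Finset.univ.filter (fun a => L a ∈ S)).card : ℝ))
      ≤ Real.exp (-(s * ε ^ 2 / 72 * t * m)) := by
  have hm' : (0 : ℝ) < m := by exact_mod_cast hm
  have hp : (S.card : ℝ) / m ≤ s := by rwa [div_le_iff₀ hm']
  refine (prob_mono fun L hL => ?_).trans ((prob_count_le (t * m) m hm S (ε / 6)
    (ε / 6 * (s * (1 + ε / 3) * t * m)) (by rw [abs_of_pos] <;> linarith)).trans ?_)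
  · exact mul_le_mul_of_nonneg_left hL.le (by positivity)
  · rw [Real.exp_le_exp]
    push_cast
    have hn : (0 : ℝ) ≤ t * m := by positivity
    have h1 : (S.card : ℝ) / m * (ε / 6 + (ε / 6) ^ 2) ≤ s * (ε / 6 + (ε / 6) ^ 2) := by gcongr
    have h2 := mul_le_mul_of_nonneg_left h1 hn
    have h3 : 0 ≤ t * m * (s * ε ^ 2) := by positivity
    nlinarith

lemma prob_lower_le {s ε : ℝ} (hs : 0 < s) (hε : 0 < ε) (hε1 : ε < 1) (t m : ℕ) (hm : 0 < m)
    (S : Finset (Fin m)) (hS : s * (1 + ε) * m ≤ (S.card : ℝ)) :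
    prob (fun L : Fin (t * m) → Fin m =>
        ((Finset.univ.filter (fun a => L a ∈ S)).card : ℝ) < s * (1 + 2 * ε / 3) * t * m)
      ≤ Real.exp (-(s * ε ^ 2 / 72 * t * m)) := by
  have hm' : (0 : ℝ) < m := by exact_mod_cast hm
  have hp : s * (1 + ε) ≤ (S.card : ℝ) / m := by rwa [le_div_iff₀ hm']
  refine (prob_mono fun L hL => ?_).trans ((prob_count_le (t * m) m hm S (-(ε / 12))
    (-(ε / 12) * (s * (1 + 2 * ε / 3) * t * m))
    (by rw [abs_neg, abs_of_pos] <;> linarith)).trans ?_)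
  · exact mul_le_mul_of_nonpos_left hL.le (by linarith)
  · rw [Real.exp_le_exp]
    push_cast
    have hn : (0 : ℝ) ≤ t * m := by positivity
    have h0 : -(ε / 12) + (-(ε / 12)) ^ 2 ≤ 0 := by nlinarith
    have h1 := mul_le_mul_of_nonneg_left (mul_le_mul_of_nonpos_right hp h0) hn
    have h3 : 0 ≤ t * m * (s * ε ^ 2) * (1 - ε) := by
      have : 0 ≤ 1 - ε := by linarith
      positivity
    nlinarith

open Classical in
theorem stmt_11 :
    ∀ s ε : ℝ, s ∈ Set.Ioo (0 : ℝ) 1 → ε ∈ Set.Ioo (0 : ℝ) 1 → s * (1 + ε) < 1 →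
      ∃ t₀ m₀ : ℕ, 0 < t₀ ∧ 0 < m₀ ∧
        ∀ t : ℕ, t₀ ≤ t → ∀ m : ℕ, m₀ ≤ m →
          prob (Ω := Fin (t * m) → Fin m) (fun L => ¬ BalancedList s ε t m L)
            ≤ Real.exp (-10 * m) := by
  intro s ε ⟨hs, _⟩ ⟨hε, hε1⟩ _
  have hc : 0 < s * ε ^ 2 / 72 := by positivity
  refine ⟨⌈12 / (s * ε ^ 2 / 72)⌉₊, 1, Nat.ceil_pos.2 (by positivity), one_pos, ?_⟩
  intro t ht m hm
  have hm1 : (1 : ℝ) ≤ m := by exact_mod_cast hm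
  have hct : 12 ≤ s * ε ^ 2 / 72 * t := by
    have := (div_le_iff₀ hc).1 (Nat.ceil_le.1 ht)
    linarith
  set δ := Real.exp (-(s * ε ^ 2 / 72 * t * m)) with hδ
  have hδ12 : δ ≤ Real.exp (-12 * m) := by
    rw [hδ, Real.exp_le_exp]
    nlinarith
  have hzero : prob (fun _ : Fin (t * m) → Fin m => False) ≤ δ := by
    simpa [prob] using (Real.exp_pos _).le
  have key : ∀ S : Finset (Fin m), prob (fun L : Fin (t * m) → Fin m =>
      (S.card = Nat.floor (s * m) ∧
        s * (1 + ε / 3) * t * m < ((Finset.univ.filter (fun a => L a ∈ S)).card : ℝ)) ∨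
      (S.card = Nat.ceil (s * (1 + ε) * m) ∧
        ((Finset.univ.filter (fun a => L a ∈ S)).card : ℝ) < s * (1 + 2 * ε / 3) * t * m))
      ≤ 2 * δ := by
    intro S
    rw [two_mul δ]
    refine (prob_or_le _ _).trans (add_le_add ?_ ?_)
    · by_cases h : S.card = Nat.floor (s * m)
      · refine (prob_mono fun L hL => hL.2).trans (prob_upper_le hs hε hε1 t m hm S ?_)
        rw [h]
        exact Nat.floor_le (by positivity)
      · exact (prob_mono fun L hL => h hL.1).trans hzero
    · by_cases h : S.card = Nat.ceil (s * (1 + ε) * m)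
      · refine (prob_mono fun L hL => hL.2).trans (prob_lower_le hs hε hε1 t m hm S ?_)
        rw [h]
        exact Nat.le_ceil _
      · exact (prob_mono fun L hL => h hL.1).trans hzero
  have hexp1 : (2 : ℝ) ≤ Real.exp 1 := by
    have := Real.add_one_le_exp (1 : ℝ)
    linarith
  calc prob (fun L : Fin (t * m) → Fin m => ¬ BalancedList s ε t m L)
      ≤ ∑ _S : Finset (Fin m), 2 * δ := by
        refine (prob_mono fun L hL => ?_).trans
          ((prob_exists_le _).trans (Finset.sum_le_sum fun S _ => key S))
        rw [BalancedList, not_and_or] at hL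
        push Not at hL
        rcases hL with ⟨S, h⟩ | ⟨S, h⟩
        · exact ⟨S, Or.inl h⟩
        · exact ⟨S, Or.inr h⟩
    _ = 2 ^ m * (2 * δ) := by simp
    _ ≤ Real.exp 1 ^ m * (Real.exp m * Real.exp (-12 * m)) := by
        gcongr
        exact hexp1.trans (Real.exp_le_exp.2 hm1)
    _ = Real.exp (-10 * m) := by
        rw [← Real.exp_nat_mul, ← Real.exp_add, ← Real.exp_add]
        ring_nf
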